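/- arXiv:2008.06401 — 2 statements merged into one kernel-verified Lean document; each statement's English description precedes it below -/
import Mathlib

section
/- For every non-negative integer k, every non-negative integer n, and every i ∈ {3, 4}, the number of (5k+4)-colour partitions of 5n+i is divisible by 5; that is, p_{5k+4}(5n+i) ≡ 0 (mod 5). -/
/-- `colouredPartitions r n` is the number of `r`-colour partitions of `n`:
multisets of pairs `(m, c)` with `m` a positive integer part and `c` one of `r`
colours, whose parts (first components, with multiplicity) sum to `n`.  Such a
multiset is encoded by its multiplicity function `f : ℕ+ × Fin r →₀ ℕ`. -/
noncomputable def colouredPartitions (r n : ℕ) : ℕ :=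
  Nat.card {f : ℕ+ × Fin r →₀ ℕ // (f.sum fun x m => (x.1 : ℕ) * m) = n}

/-!
Write `E = ∏ (1 - X ^ m)`, so that `E ^ r` is inverse to the generating series `G r` of `r`-colour
partitions. Modulo a prime `p` with `r + 1 = p * k`, the series `E ^ (r + 1) = (E ^ k) ^ p` is a
series in `X ^ p`, and hence so is `G r / E = E ^ (-(r + 1))`. Thus the exponents of `G r` modulo
`p` are congruent to those of `E`, which by Euler's pentagonal number theorem are the generalized
pentagonal numbers `j (3 j - 1) / 2`. Modulo `5` these only take the values `0`, `1`, `2`.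
-/

open PowerSeries Filter
open scoped PowerSeries.WithPiTopology

section InfiniteProduct

theorem hasProd_comp_fst {ι M : Type*} [CommMonoid M] [TopologicalSpace M] [ContinuousMul M]
    {f : ι → M} {a : M} (hf : HasProd f a) (κ : Type*) [Fintype κ] :
    HasProd (fun x : ι × κ ↦ f x.1) (a ^ Fintype.card κ) := by
  classical
  have hasProd_fibre (c : κ) : HasProd (fun x : ι × κ ↦ if x.2 = c then f x.1 else 1) a := by
    refine (Function.Injective.hasProd_iff (Prod.mk_left_injective c) fun x hx ↦ ?_).mp ?_
    · exact if_neg fun hxc ↦ hx ⟨x.1, by rw [← hxc]⟩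
    · simpa [Function.comp_def] using hf
  simpa using hasProd_prod (s := Finset.univ) fun c _ ↦ hasProd_fibre c

end InfiniteProduct

section Expand

theorem expand_mk_one_mul_one_sub_X_pow {R : Type*} [CommRing R] {m : ℕ} (hm : m ≠ 0) :
    expand m hm (mk 1) * (1 - X ^ m : R⟦X⟧) = 1 := by
  rw [← expand_X m hm, ← map_one (expand m hm), ← map_sub, ← map_mul, mk_one_mul_one_sub_eq_one,
    map_one]

theorem pow_prime_eq_expand {p : ℕ} [hp : Fact p.Prime] (f : (ZMod p)⟦X⟧) :
    f ^ p = expand p hp.out.ne_zero f := by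
  rw [← MvPowerSeries.map_frobenius_expand p hp.out.ne_zero, ZMod.frobenius_zmod]
  exact DFunLike.congr_fun MvPowerSeries.map_id _

theorem coeff_expand_mul_eq_zero {R : Type*} [CommRing R] {p n : ℕ} (hp : p ≠ 0) (f : R⟦X⟧)
    {g : R⟦X⟧} (hg : ∀ b, b ≡ n [MOD p] → coeff b g = 0) : coeff n (expand p hp f * g) = 0 := by
  rw [coeff_mul]
  refine Finset.sum_eq_zero fun ⟨a, b⟩ hab ↦ ?_
  obtain rfl : a + b = n := Finset.HasAntidiagonal.mem_antidiagonal.mp hab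
  by_cases ha : p ∣ a
  · rw [hg b (by simpa using (Nat.modEq_zero_iff_dvd.mpr ha).symm.add_right b), mul_zero]
  · rw [coeff_expand_of_not_dvd p hp f ha, zero_mul]

end Expand

section PointwiseSMul

variable {ι A : Type*}

theorem support_smul_subset [Semiring A] (w : ι → A) (f : ι →₀ A) :
    (w • f).support ⊆ f.support := fun _ hi ↦
  Finsupp.mem_support_iff.mpr (right_ne_zero_of_mul (Finsupp.mem_support_iff.mp hi))

theorem sum_smul_eq_weight [CommSemiring A] (w : ι → A) (f : ι →₀ A) :
    ((w • f).sum fun _ m ↦ m) = f.weight w := by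
  rw [Finsupp.sum_of_support_subset _ (support_smul_subset w f) _ fun _ _ ↦ rfl]
  exact Finset.sum_congr rfl fun i _ ↦ mul_comm (w i) (f i)

theorem exists_smul_eq_of_forall_dvd [Semiring A] {w : ι → A} {l : ι →₀ A}
    (hl : ∀ i ∈ l.support, w i ∣ l i) : ∃ f : ι →₀ A, w • f = l := by
  classical
  refine ⟨Finsupp.indicator l.support fun i hi ↦ (hl i hi).choose, Finsupp.ext fun i ↦ ?_⟩
  rw [Finsupp.coe_pointwise_smul, Pi.smul_apply', smul_eq_mul, Finsupp.indicator_apply]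
  split_ifs with hi
  · exact (hl i hi).choose_spec.symm
  · rw [mul_zero, Finsupp.notMem_support_iff.mp hi]

end PointwiseSMul

section WeightedCount

variable {ι : Type*} {w : ι → ℕ}

theorem smul_image_weight_eq [DecidableEq ι] {S : Finset ι} {n : ℕ} (hS : ∀ i, w i ≤ n → i ∈ S) :
    (w • ·) '' {f : ι →₀ ℕ | f.weight w = n} =
      {l | l ∈ S.finsuppAntidiag n ∧ ∀ i ∈ S, w i ∣ l i} := by
  ext l
  simp only [Set.mem_image, Set.mem_ofPred_eq, Finset.mem_finsuppAntidiag']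
  constructor
  · rintro ⟨f, rfl, rfl⟩
    have support_subset : f.support ⊆ S := fun i hi ↦
      hS i (Finsupp.le_weight_of_ne_zero' w (Finsupp.mem_support_iff.mp hi))
    exact ⟨⟨sum_smul_eq_weight w f, (support_smul_subset w f).trans support_subset⟩,
      fun i _ ↦ Dvd.intro (f i) rfl⟩
  · rintro ⟨⟨sum_eq, support_subset⟩, hdvd⟩
    obtain ⟨f, rfl⟩ := exists_smul_eq_of_forall_dvd fun i hi ↦ hdvd i (support_subset hi)
    exact ⟨f, (sum_smul_eq_weight w f).symm.trans sum_eq, rfl⟩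

variable (R : Type*) [CommRing R]

theorem coeff_prod_expand_mk_one (hw : ∀ i, w i ≠ 0) {S : Finset ι} {n : ℕ}
    (hS : ∀ i, w i ≤ n → i ∈ S) :
    coeff n (∏ i ∈ S, expand (w i) (hw i) (mk 1 : R⟦X⟧)) =
      Nat.card {f : ι →₀ ℕ // f.weight w = n} := by
  classical
  have smul_injective : Function.Injective fun f : ι →₀ ℕ ↦ w • f := fun f g hfg ↦
    Finsupp.ext fun i ↦ Nat.eq_of_mul_eq_mul_left (Nat.pos_of_ne_zero (hw i))
      (DFunLike.congr_fun hfg i)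
  simp_rw [coeff_prod, coeff_expand, coeff_mk, Pi.one_apply, Finset.prod_ite_zero,
    Finset.prod_const_one, Finset.sum_boole]
  rw [← Set.ncard_coe_finset, Finset.coe_filter, ← smul_image_weight_eq hS,
    Set.ncard_image_of_injective _ smul_injective, ← Nat.card_coe_set_eq]
  rfl

theorem hasProd_powerSeriesMk_card_weight_eq [TopologicalSpace R] (hw : ∀ i, w i ≠ 0)
    (hfin : ∀ n, {i | w i ≤ n}.Finite) :
    HasProd (fun i ↦ expand (w i) (hw i) (mk 1 : R⟦X⟧))
      (mk fun n ↦ (Nat.card {f : ι →₀ ℕ // f.weight w = n} : R)) := by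
  rw [HasProd, WithPiTopology.tendsto_iff_coeff_tendsto]
  refine fun n ↦ tendsto_atTop_of_eventually_const (i₀ := (hfin n).toFinset) fun S hS ↦ ?_
  rw [coeff_mk]
  exact coeff_prod_expand_mk_one R hw fun i hi ↦ hS ((hfin n).mem_toFinset.mpr hi)

variable {R}

theorem powerSeriesMk_card_weight_eq_mul_eq_one [TopologicalSpace R] [IsTopologicalSemiring R]
    [T2Space R] (hw : ∀ i, w i ≠ 0) (hfin : ∀ n, {i | w i ≤ n}.Finite) {Q : R⟦X⟧}
    (hQ : HasProd (fun i ↦ 1 - X ^ w i) Q) :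
    (mk fun n ↦ (Nat.card {f : ι →₀ ℕ // f.weight w = n} : R)) * Q = 1 := by
  have hprod := (hasProd_powerSeriesMk_card_weight_eq R hw hfin).mul hQ
  simp only [expand_mk_one_mul_one_sub_X_pow] at hprod
  exact hprod.unique hasProd_one

end WeightedCount

section ColouredPartitions

theorem colouredPartitions_eq_card_weight (r n : ℕ) :
    colouredPartitions r n =
      Nat.card {f : ℕ+ × Fin r →₀ ℕ // f.weight (fun x ↦ (x.1 : ℕ)) = n} := by
  simp only [colouredPartitions, Finsupp.weight_apply, smul_eq_mul, mul_comm]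

theorem powerSeriesMk_colouredPartitions_mul_pentagonalSeries_pow (R : Type*) [CommRing R] (r : ℕ) :
    (mk fun n ↦ (colouredPartitions r n : R)) * pentagonalSeries R ^ r = 1 := by
  let _ : TopologicalSpace R := ⊥
  have _ : DiscreteTopology R := ⟨rfl⟩
  have hprod : HasProd (fun x : ℕ+ × Fin r ↦ (1 - X ^ (x.1 : ℕ) : R⟦X⟧))
      (pentagonalSeries R ^ r) := by
    simpa only [Fintype.card_fin] using hasProd_comp_fst
      (hasProd_pnat_iff_hasProd_succ (f := fun m ↦ (1 - X ^ m : R⟦X⟧)) |>.mpr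
        (WithPiTopology.hasProd_one_sub_X_pow R)) (Fin r)
  have hfin (n : ℕ) : {x : ℕ+ × Fin r | (x.1 : ℕ) ≤ n}.Finite :=
    ((Set.finite_Iic n).preimage PNat.coe_injective.injOn).prod Set.finite_univ |>.subset
      fun _ hx ↦ ⟨hx, trivial⟩
  simp_rw [colouredPartitions_eq_card_weight]
  exact powerSeriesMk_card_weight_eq_mul_eq_one (fun x ↦ x.1.ne_zero) hfin hprod

variable {p : ℕ} [hp : Fact p.Prime]

theorem powerSeriesMk_colouredPartitions_eq_expand_mul {r k : ℕ} (hr : r + 1 = p * k) :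
    (mk fun n ↦ (colouredPartitions r n : ZMod p)) =
      expand p hp.out.ne_zero (mk fun n ↦ (colouredPartitions k n : ZMod p)) *
        pentagonalSeries (ZMod p) := by
  set G : ℕ → (ZMod p)⟦X⟧ := fun r ↦ mk fun n ↦ (colouredPartitions r n : ZMod p)
  set E := pentagonalSeries (ZMod p)
  have G_mul_E_pow (s : ℕ) : G s * E ^ s = 1 :=
    powerSeriesMk_colouredPartitions_mul_pentagonalSeries_pow (ZMod p) s
  have expand_E_pow : expand p hp.out.ne_zero (E ^ k) = E ^ r * E := by
    rw [← pow_prime_eq_expand, ← pow_mul, mul_comm k, ← hr, pow_succ]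
  calc G r = G r * expand p hp.out.ne_zero (G k * E ^ k) := by rw [G_mul_E_pow, map_one, mul_one]
    _ = expand p hp.out.ne_zero (G k) * E * (G r * E ^ r) := by rw [map_mul, expand_E_pow]; ring
    _ = expand p hp.out.ne_zero (G k) * E := by rw [G_mul_E_pow, mul_one]

end ColouredPartitions

theorem pentagonal_mod_five_lt_three (j : ℤ) : pentagonal j % 5 < 3 := by
  have h := congr_arg (· % 5) (two_mul_natCast_pentagonal j)
  have hj : j % 5 = 0 ∨ j % 5 = 1 ∨ j % 5 = 2 ∨ j % 5 = 3 ∨ j % 5 = 4 := by lia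
  rcases hj with hj | hj | hj | hj | hj <;> simp [Int.mul_emod, Int.sub_emod, hj] at h <;> omega

theorem colouredPartitions_cong_mod5_4_general {p : ℕ} (hp : p.Prime) {r n : ℕ} (hr : p ∣ r + 1)
    (hn : ∀ j : ℤ, ¬ pentagonal j ≡ n [MOD p]) : p ∣ colouredPartitions r n := by
  have : Fact p.Prime := ⟨hp⟩
  obtain ⟨k, hk⟩ := hr
  rw [← ZMod.natCast_eq_zero_iff, ← coeff_mk n fun m ↦ (colouredPartitions r m : ZMod p),
    powerSeriesMk_colouredPartitions_eq_expand_mul hk]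
  refine coeff_expand_mul_eq_zero _ _ fun b hb ↦ coeff_pentagonalSeries_eq_zero _ ?_
  rintro ⟨j, rfl⟩
  exact hn j hb

theorem colouredPartitions_cong_mod5_4 (k n i : ℕ) (hi : i = 3 ∨ i = 4) :
    5 ∣ colouredPartitions (5 * k + 4) (5 * n + i) :=
  colouredPartitions_cong_mod5_4_general Nat.prime_five ⟨k + 1, rfl⟩ fun j hj ↦ by
    have := pentagonal_mod_five_lt_three j
    rw [Nat.ModEq] at hj
    lia
end

section
/- For every non-negative integer k, every non-negative integer n, and every j ∈ {3, 4, 6}, the number of (7k+6)-colour partitions of 7n+j is divisible by 7; that is, p_{7k+6}(7n+j) ≡ 0 (mod 7). -/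
/-!
Let `P = ∏ (1 - X ^ m)⁻¹` be the generating series of partitions, so that `P ^ r` is the one of
`r`-colour partitions, and let `p` be a prime dividing `r + 1`. Then `P ^ r = P⁻¹ * P ^ (r + 1)`,
where modulo `p` the second factor is a `p`-th power and hence a series in `X ^ p`, while `P⁻¹` is
supported on the pentagonal numbers `m = k * (3 * k - 1) / 2`. As `24 * m + 1 = (6 * k - 1) ^ 2`,
every exponent `N` that occurs in `P ^ r` modulo `p` makes `24 * N + 1` a square modulo `p`.
-/

open PowerSeries Finset

section WeightSeries

variable (R : Type*) {α β ι σ : Type*}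

/-- The generating series `∑ₙ #{a | wt a = n} Xⁿ` of a type graded by a weight function. A weight
attained infinitely often gets coefficient `0`, the junk value of `Nat.card`. -/
noncomputable def weightSeries [Semiring R] (wt : α → ℕ) : R⟦X⟧ :=
  PowerSeries.mk fun n => (Nat.card {a // wt a = n} : R)

theorem weightSeries_congr [Semiring R] {wt : α → ℕ} {wt' : β → ℕ} (e : α ≃ β)
    (h : ∀ a, wt' (e a) = wt a) : weightSeries R wt = weightSeries R wt' := by
  ext n
  simp only [weightSeries, coeff_mk]
  have fibreEquiv : {a // wt a = n} ≃ {b // wt' b = n} := e.subtypeEquiv fun a => by rw [h]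
  rw [Nat.card_congr fibreEquiv]

/-- A family of total weight `n` is a way to distribute `n` over the indices together with a family
having the prescribed individual weights. -/
noncomputable def piWeightEquivSigma [Fintype ι] [DecidableEq ι] {α : ι → Type*}
    (wt : ∀ i, α i → ℕ) (n : ℕ) :
    {g : ∀ i, α i // ∑ i, wt i (g i) = n} ≃
      Σ l : finsuppAntidiag (univ : Finset ι) n, {g : ∀ i, α i // ∀ i, wt i (g i) = l.1 i} where
  toFun g := ⟨⟨Finsupp.equivFunOnFinite.symm fun i => wt i (g.1 i), by simpa using g.2⟩,
    g.1, fun _ => rfl⟩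
  invFun x := ⟨x.2.1, by
    simp only [x.2.2]
    exact (mem_finsuppAntidiag.mp x.1.2).1⟩
  left_inv _ := rfl
  right_inv := by
    rintro ⟨⟨l, hl⟩, g, hg⟩
    obtain rfl : l = Finsupp.equivFunOnFinite.symm fun i => wt i (g i) :=
      Finsupp.ext fun i => (hg i).symm
    rfl

theorem card_pi_weight_eq_sum_prod [Fintype ι] [DecidableEq ι] {α : ι → Type*}
    (wt : ∀ i, α i → ℕ) (hwt : ∀ i n, Finite {a // wt i a = n}) (n : ℕ) :
    Nat.card {g : ∀ i, α i // ∑ i, wt i (g i) = n} =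
      ∑ l ∈ finsuppAntidiag univ n, ∏ i, Nat.card {a // wt i a = l i} := by
  have fibreEquiv (l : ι →₀ ℕ) :
      {g : ∀ i, α i // ∀ i, wt i (g i) = l i} ≃ ∀ i, {a // wt i a = l i} :=
    Equiv.subtypePiEquivPi (p := fun i a => wt i a = l i)
  have fibre_finite (l : ι →₀ ℕ) : Finite {g : ∀ i, α i // ∀ i, wt i (g i) = l i} :=
    .of_equiv _ (fibreEquiv l).symm
  rw [Nat.card_congr (piWeightEquivSigma wt n), Nat.card_sigma,
    ← sum_coe_sort (finsuppAntidiag univ n) fun l => ∏ i, Nat.card {a // wt i a = l i}]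
  exact sum_congr rfl fun l _ => by rw [Nat.card_congr (fibreEquiv l.1), Nat.card_pi]

theorem weightSeries_pi [CommSemiring R] [Fintype ι] {α : ι → Type*} (wt : ∀ i, α i → ℕ)
    (hwt : ∀ i n, Finite {a // wt i a = n}) :
    weightSeries R (fun g : ∀ i, α i => ∑ i, wt i (g i)) = ∏ i, weightSeries R (wt i) := by
  classical
  ext n
  simp [weightSeries, coeff_prod, card_pi_weight_eq_sum_prod wt hwt]

theorem sum_weight_curry {S M : Type*} [Semiring S] [AddCommMonoid M] [Module S M] [Fintype ι]
    (w : σ → M) (f : ι × σ →₀ S) :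
    ∑ i, Finsupp.weight w (f.curry i) = Finsupp.weight (fun x => w x.2) f := by
  simp only [Finsupp.weight_apply]
  rw [← Finsupp.sum_curry_index f fun _ x m => m • w x, Finsupp.sum_fintype _ _ (by simp)]

theorem weightSeries_weight_fst [CommSemiring R] [Fintype ι] (w : σ → ℕ)
    (hw : ∀ n, Finite {f : σ →₀ ℕ // Finsupp.weight w f = n}) :
    weightSeries R (fun f : σ × ι →₀ ℕ => Finsupp.weight (fun x => w x.1) f) =
      weightSeries R (fun f : σ →₀ ℕ => Finsupp.weight w f) ^ Fintype.card ι := by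
  let e : (σ × ι →₀ ℕ) ≃ (ι → σ →₀ ℕ) :=
    (Finsupp.equivCongrLeft (Equiv.prodComm σ ι)).trans
      (Finsupp.curryEquiv.trans Finsupp.equivFunOnFinite)
  have weight_e (f : σ × ι →₀ ℕ) :
      ∑ i, Finsupp.weight w (e f i) = Finsupp.weight (fun x => w x.1) f := by
    refine (sum_weight_curry w _).trans ?_
    simp [Finsupp.weight_apply, Finsupp.equivMapDomain_eq_mapDomain,
      Finsupp.sum_mapDomain_index, add_mul]
  rw [weightSeries_congr R (wt' := fun g => ∑ i, Finsupp.weight w (g i)) e weight_e,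
    weightSeries_pi R _ fun _ => hw, prod_const, card_univ]

end WeightSeries

section Partitions

theorem sum_map_toMultiset_eq_weight {σ M : Type*} [AddCommMonoid M] (w : σ → M) (f : σ →₀ ℕ) :
    (f.toMultiset.map w).sum = Finsupp.weight w f := by
  rw [Finsupp.toMultiset_map, Finsupp.sum_toMultiset, Finsupp.weight_apply,
    Finsupp.sum_mapDomain_index (by simp) (by simp [add_nsmul])]

theorem map_val_map_toPNat' {s : Multiset ℕ} (hs : ∀ m ∈ s, 0 < m) :
    (s.map Nat.toPNat').map PNat.val = s := by
  rw [Multiset.map_map]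
  exact (Multiset.map_congr rfl fun m hm => PNat.toPNat'_coe (hs m hm)).trans s.map_id

/-- Partitions of `n` encoded by the multiplicities of their parts. -/
noncomputable def multiplicityEquivPartition (n : ℕ) :
    {f : ℕ+ →₀ ℕ // Finsupp.weight PNat.val f = n} ≃ n.Partition where
  toFun f :=
    { parts := f.1.toMultiset.map PNat.val
      parts_pos := by simp +contextual
      parts_sum := by rw [sum_map_toMultiset_eq_weight, f.2] }
  invFun p := ⟨Multiset.toFinsupp (p.parts.map Nat.toPNat'), by
    rw [← sum_map_toMultiset_eq_weight, Multiset.toFinsupp_toMultiset,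
      map_val_map_toPNat' fun _ => p.parts_pos, p.parts_sum]⟩
  left_inv f := by simp [Multiset.map_map]
  right_inv p := Nat.Partition.ext (by simpa using map_val_map_toPNat' fun _ => p.parts_pos)

variable (R : Type*)

/-- The generating series `P` of the partition function, with coefficients in `R`. -/
noncomputable def partitionSeries [Semiring R] : R⟦X⟧ :=
  PowerSeries.mk fun n => (Fintype.card n.Partition : R)

open PowerSeries.WithPiTopology in
theorem partitionSeries_mul_pentagonalSeries [CommRing R] :
    partitionSeries R * pentagonalSeries R = 1 := by
  let : TopologicalSpace R := ⊥
  have : DiscreteTopology R := ⟨rfl⟩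
  have prod_geometric : HasProd (fun i : ℕ => ∑' j : ℕ, (X : R⟦X⟧) ^ ((i + 1) * j))
      (partitionSeries R) := by
    simpa [partitionSeries, Nat.Partition.restricted] using
      Nat.Partition.hasProd_powerSeriesMk_card_restricted R fun _ => True
  have geometric_mul (i : ℕ) : (∑' j : ℕ, (X : R⟦X⟧) ^ ((i + 1) * j)) * (1 - X ^ (i + 1)) = 1 := by
    simp only [pow_mul]
    exact tsum_pow_mul_one_sub_of_constantCoeff_eq_zero (by simp)
  refine (prod_geometric.mul (hasProd_one_sub_X_pow R)).unique ?_
  simpa only [geometric_mul] using hasProd_one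

theorem weightSeries_pnat_eq_partitionSeries [Semiring R] :
    weightSeries R (fun f : ℕ+ →₀ ℕ => Finsupp.weight PNat.val f) = partitionSeries R := by
  ext n
  simp only [weightSeries, partitionSeries, coeff_mk]
  rw [Nat.card_congr (multiplicityEquivPartition n), Nat.card_eq_fintype_card]

theorem mk_colouredPartitions_eq_pow [CommSemiring R] (r : ℕ) :
    (PowerSeries.mk fun n => (colouredPartitions r n : R)) = partitionSeries R ^ r := by
  have finite_weight (n : ℕ) : Finite {f : ℕ+ →₀ ℕ // Finsupp.weight PNat.val f = n} :=
    .of_equiv _ (multiplicityEquivPartition n).symm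
  have pow_eq := weightSeries_weight_fst R (ι := Fin r) PNat.val finite_weight
  rw [Fintype.card_fin, weightSeries_pnat_eq_partitionSeries] at pow_eq
  rw [← pow_eq]
  simp [weightSeries, colouredPartitions, Finsupp.weight_apply, mul_comm]

end Partitions

section Congruence

variable {R : Type*} [CommRing R] {p N : ℕ}

theorem coeff_pow_char_eq_zero [ExpChar R p] (Q : R⟦X⟧) (hN : ¬ p ∣ N) : coeff N (Q ^ p) = 0 := by
  have pow_eq : (expand p (expChar_ne_zero R p) Q).map (frobenius R p) = Q ^ p :=
    MvPowerSeries.map_frobenius_expand p _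
  rw [← pow_eq, coeff_map, coeff_expand_of_not_dvd _ _ _ hN, map_zero]

theorem coeff_mul_pow_char_eq_zero [ExpChar R p] (F Q : R⟦X⟧)
    (hF : ∀ m : ℕ, (m : ZMod p) = N → coeff m F = 0) : coeff N (F * Q ^ p) = 0 := by
  rw [coeff_mul]
  refine sum_eq_zero fun ⟨a, b⟩ hab => ?_
  by_cases hb : p ∣ b
  · have a_eq : (a : ZMod p) = N := by
      rw [← mem_antidiagonal.mp hab, Nat.cast_add, (ZMod.natCast_eq_zero_iff b p).mpr hb, add_zero]
    rw [hF a a_eq, zero_mul]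
  · rw [coeff_pow_char_eq_zero Q hb, mul_zero]

theorem twentyFour_mul_natCast_pentagonal_add_one (k : ℤ) :
    24 * (pentagonal k : R) + 1 = (6 * k - 1) ^ 2 := by
  have two_mul_eq : 2 * (pentagonal k : R) = k * (3 * k - 1) :=
    mod_cast congrArg (Int.cast : ℤ → R) (two_mul_natCast_pentagonal k)
  linear_combination 12 * two_mul_eq

theorem coeff_pentagonalSeries_eq_zero_of_not_isSquare (S : Type*) [CommRing S] {m : ℕ}
    (hm : ¬ IsSquare (24 * (m : S) + 1)) : coeff m (pentagonalSeries R) = 0 := by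
  refine coeff_pentagonalSeries_eq_zero R ?_
  rintro ⟨k, rfl⟩
  exact hm (twentyFour_mul_natCast_pentagonal_add_one (R := S) k ▸ IsSquare.sq _)

theorem colouredPartitions_cong_mod7_6_general {r : ℕ} (hp : p.Prime) (hr : p ∣ r + 1)
    (hN : ¬ IsSquare (24 * (N : ZMod p) + 1)) : p ∣ colouredPartitions r N := by
  have : Fact p.Prime := ⟨hp⟩
  obtain ⟨s, hs⟩ := hr
  set P := partitionSeries (ZMod p)
  have P_pow_eq : P ^ r = pentagonalSeries (ZMod p) * (P ^ s) ^ p := by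
    rw [← pow_mul, mul_comm s, ← hs, pow_succ]
    linear_combination (-P ^ r) * partitionSeries_mul_pentagonalSeries (ZMod p)
  have coeff_eq_zero : coeff N (P ^ r) = 0 := by
    rw [P_pow_eq]
    refine coeff_mul_pow_char_eq_zero _ _ fun m hm => ?_
    exact coeff_pentagonalSeries_eq_zero_of_not_isSquare (ZMod p) (by rwa [hm])
  rwa [← mk_colouredPartitions_eq_pow, coeff_mk, ZMod.natCast_eq_zero_iff] at coeff_eq_zero

end Congruence

theorem colouredPartitions_cong_mod7_6 (k n j : ℕ) (hj : j = 3 ∨ j = 4 ∨ j = 6) :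
    7 ∣ colouredPartitions (7 * k + 6) (7 * n + j) := by
  refine colouredPartitions_cong_mod7_6_general (by norm_num) ⟨k + 1, by ring⟩ ?_
  rcases hj with rfl | rfl | rfl <;> push_cast <;> reduce_mod_char <;> decide
end
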